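/- Let A be a real m×n matrix with rows a_1,…,a_m and b ∈ ℝ^m, and let V = {v ∈ ℝ^n : A v ≥ b}. Suppose that for some c ∈ ℝ^n the set of minimizers of v ↦ c · v over V is a singleton {v*}. Then {v ∈ V : a_j · v = b_j for every j with a_j · v* = b_j} = {v*}; that is, the face of V determined by the full set of constraints active at the unique minimizer is the singleton {v*}. -/

import Mathlib

open Matrix Set BigOperators

/-- If every constraint active at a feasible point `x` has zero slope along `d`, then one can move
from `x` a positive distance along `d` while staying feasible. -/
theorem exists_pos_feasible_add_smul {ι κ : Type*} [Finite ι] [Fintype κ]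
    {A : Matrix ι κ ℝ} {b : ι → ℝ} {x d : κ → ℝ} (hx : b ≤ A.mulVec x)
    (hd : ∀ j, A j ⬝ᵥ x = b j → A j ⬝ᵥ d = 0) :
    ∃ t : ℝ, 0 < t ∧ b ≤ A.mulVec (x + t • d) := by
  have key : ∀ j, ∀ᶠ t in nhdsWithin (0 : ℝ) (Ioi 0), b j ≤ A j ⬝ᵥ x + t * (A j ⬝ᵥ d) := by
    intro j
    rcases (hx j).eq_or_lt with h | h
    · refine Filter.Eventually.of_forall fun t => ?_
      rw [hd j h.symm, mul_zero, add_zero]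
      exact hx j
    · have hcont : Continuous fun t : ℝ => A j ⬝ᵥ x + t * (A j ⬝ᵥ d) := by fun_prop
      have hlt : b j < A j ⬝ᵥ x + 0 * (A j ⬝ᵥ d) := by
        rw [zero_mul, add_zero]
        exact h
      exact nhdsWithin_le_nhds
        ((hcont.continuousAt.eventually (lt_mem_nhds hlt)).mono fun _ ht => ht.le)
  obtain ⟨t, ht, htpos⟩ := ((Filter.eventually_all.2 key).and self_mem_nhdsWithin).exists
  refine ⟨t, htpos, fun j => ?_⟩
  change b j ≤ A j ⬝ᵥ (x + t • d)
  rw [dotProduct_add, dotProduct_smul, smul_eq_mul]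
  exact ht j

theorem stmt_12 (m n : ℕ)
    (A : Matrix (Fin m) (Fin n) ℝ) (b : Fin m → ℝ)
    (c : Fin n → ℝ) (vstar : Fin n → ℝ)
    (huniq : {v | b ≤ A.mulVec v ∧ ∀ w, b ≤ A.mulVec w → c ⬝ᵥ v ≤ c ⬝ᵥ w} = {vstar}) :
    {v | b ≤ A.mulVec v ∧ ∀ j, A j ⬝ᵥ vstar = b j → A j ⬝ᵥ v = b j} = {vstar} := by
  obtain ⟨hfeas, hmin⟩ := huniq.symm.subset (mem_singleton vstar)
  refine Subset.antisymm ?_ (singleton_subset_iff.2 ⟨hfeas, fun _ h => h⟩)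
  rintro v ⟨hv, hact⟩
  obtain ⟨t, ht, hfeas'⟩ := exists_pos_feasible_add_smul (d := vstar - v) hfeas fun j hj => by
    rw [dotProduct_sub, hj, hact j hj, sub_self]
  have hle := hmin _ hfeas'
  rw [dotProduct_add, dotProduct_smul, smul_eq_mul, dotProduct_sub, le_add_iff_nonneg_right,
    mul_nonneg_iff_of_pos_left ht, sub_nonneg] at hle
  exact huniq.subset ⟨hv, fun w hw => hle.trans (hmin w hw)⟩
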